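/- Let F(x,y) = r·φ(u,s,v,t) be a general spherically symmetric metric on a domain of ℝⁿ. At a point (x,y), y ≠ 0, where the fundamental tensor (g_{ij}) is invertible, φ > 0 and σ₁ ≠ 0, the mean Cartan torsion satisfies I_k = (1/(2r))·(H·s_k + K·t_k) for every index k. -/

import Mathlib

/-!
Write `ρ_i = y_i / r`, `P_{ij} = δ_{ij} - ρ_i ρ_j`, `F_i = φ ρ_i + φ_s s_i + φ_t t_i` and
`A_{ij} = σ₁ P_{ij} + φ_ss s_i s_j + φ_st (s_i t_j + t_i s_j) + φ_tt t_i t_j`.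
Since `∂_k s = s_k / r` and `∂_k t = t_k / r`, direct differentiation gives `∂_i F = F_i`,
`∂_j F_i = A_{ij} / r`, hence `g_{ij} = F_i F_j + φ A_{ij}`; differentiating once more,
all terms along `ρ` cancel and, with `ℓ = φ_s s + φ_t t` and `m = σ_{1s} s + σ_{1t} t`,
`2 r C_{ijk}` is the sum of the cyclic sums of `ℓ_k A_{ij}` and of `φ P_{ij} m_k`, and of `φ` times
the symmetric cubic form in `s, t` whose coefficients are the third derivatives of `φ`
(`cart_eq`).

For the trace, `A ρ = 0` and `F_i ρ^i = φ` give `g ρ = φ F_•`, so that `g^{ij} F_j = ρ^i / φ`,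
which is orthogonal to `s` and `t`. Therefore `g^{ij} φ A_{ij} = n - 1` and
`g^{ij} s_i φ A_{jk} = s_k` (likewise for `t`). Replacing `P` by
`(A - φ_ss s s - φ_st (s t + t s) - φ_tt t t) / σ₁` reduces `g^{ij} C_{ijk}` to these traces and to
the three norms (`trace_formula`).
-/


noncomputable section

open scoped BigOperators

namespace GSSFinsler

/-- `k`-th standard basis vector of `ℝⁿ`. -/
def bvec (n : ℕ) (k : Fin n) : Fin n → ℝ := Pi.single k 1

/-- Standard inner product on `ℝⁿ`. -/
def ip {n : ℕ} (x y : Fin n → ℝ) : ℝ := ∑ i, x i * y i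

/-- Euclidean norm on `ℝⁿ`. -/
def nrm {n : ℕ} (y : Fin n → ℝ) : ℝ := Real.sqrt (ip y y)

/-! Partial derivative operators on a smooth function of four real variables
`φ = φ(u, s, v, t)`. -/

def pdu (f : ℝ → ℝ → ℝ → ℝ → ℝ) (u s v t : ℝ) : ℝ := deriv (fun z => f z s v t) u
def pds (f : ℝ → ℝ → ℝ → ℝ → ℝ) (u s v t : ℝ) : ℝ := deriv (fun z => f u z v t) s
def pdv (f : ℝ → ℝ → ℝ → ℝ → ℝ) (u s v t : ℝ) : ℝ := deriv (fun z => f u s z t) v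
def pdt (f : ℝ → ℝ → ℝ → ℝ → ℝ) (u s v t : ℝ) : ℝ := deriv (fun z => f u s v z) t

/-- `u := |x|²`. -/
def uu {n : ℕ} (x : Fin n → ℝ) : ℝ := ip x x
/-- `s := ⟨x,y⟩/|y|`. -/
def sc {n : ℕ} (x y : Fin n → ℝ) : ℝ := ip x y / nrm y
/-- `v := ⟨a,x⟩`. -/
def vc {n : ℕ} (a x : Fin n → ℝ) : ℝ := ip a x
/-- `t := ⟨a,y⟩/|y|`. -/
def tc {n : ℕ} (a y : Fin n → ℝ) : ℝ := ip a y / nrm y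

/-- Evaluation of a function of `(u,s,v,t)` at the point determined by `(a,x,y)`. -/
def ev {n : ℕ} (f : ℝ → ℝ → ℝ → ℝ → ℝ) (a x y : Fin n → ℝ) : ℝ :=
  f (uu x) (sc x y) (vc a x) (tc a y)

/-- The general spherically symmetric metric `F(x,y) = |y| φ(u,s,v,t)`. -/
def Fm {n : ℕ} (φ : ℝ → ℝ → ℝ → ℝ → ℝ) (a x y : Fin n → ℝ) : ℝ :=
  nrm y * φ (uu x) (sc x y) (vc a x) (tc a y)

/-- Fundamental tensor `g_{ij} := ½ ∂²(F²)/∂y^i∂y^j`. -/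
def gm {n : ℕ} (φ : ℝ → ℝ → ℝ → ℝ → ℝ) (a x y : Fin n → ℝ) (i j : Fin n) : ℝ :=
  (1/2) * fderiv ℝ (fun z => fderiv ℝ (fun w => (Fm φ a x w)^2) z (bvec n j)) y (bvec n i)

/-- Cartan tensor `C_{ijk} := ½ ∂g_{ij}/∂y^k`. -/
def cart {n : ℕ} (φ : ℝ → ℝ → ℝ → ℝ → ℝ) (a x y : Fin n → ℝ) (i j k : Fin n) : ℝ :=
  (1/2) * fderiv ℝ (fun z => gm φ a x z i j) y (bvec n k)

/-- Angular metric `h_{ij} := g_{ij} − F_{y^i}F_{y^j}`. -/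
def ang {n : ℕ} (φ : ℝ → ℝ → ℝ → ℝ → ℝ) (a x y : Fin n → ℝ) (i j : Fin n) : ℝ :=
  gm φ a x y i j -
    fderiv ℝ (fun w => Fm φ a x w) y (bvec n i) *
      fderiv ℝ (fun w => Fm φ a x w) y (bvec n j)

/-- The fundamental tensor as a matrix. -/
def gMat {n : ℕ} (φ : ℝ → ℝ → ℝ → ℝ → ℝ) (a x y : Fin n → ℝ) :
    Matrix (Fin n) (Fin n) ℝ :=
  Matrix.of fun i j => gm φ a x y i j

/-- The inverse fundamental tensor `g^{ij}`. -/
def gInv {n : ℕ} (φ : ℝ → ℝ → ℝ → ℝ → ℝ) (a x y : Fin n → ℝ) :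
    Matrix (Fin n) (Fin n) ℝ :=
  (gMat φ a x y)⁻¹

/-- Mean Cartan torsion `I_k := g^{jl} C_{jlk}`. -/
def mci {n : ℕ} (φ : ℝ → ℝ → ℝ → ℝ → ℝ) (a x y : Fin n → ℝ) (k : Fin n) : ℝ :=
  ∑ j, ∑ l, gInv φ a x y j l * cart φ a x y j l k

/-- Squared norm `‖I‖² := g^{ij} I_i I_j` of the mean Cartan torsion. -/
def normI2 {n : ℕ} (φ : ℝ → ℝ → ℝ → ℝ → ℝ) (a x y : Fin n → ℝ) : ℝ :=
  ∑ i, ∑ j, gInv φ a x y i j * mci φ a x y i * mci φ a x y j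

/-- `s_i := x_i − s·y_i/r`. -/
def sv {n : ℕ} (x y : Fin n → ℝ) (i : Fin n) : ℝ := x i - sc x y * (y i / nrm y)
/-- `t_i := a_i − t·y_i/r`. -/
def tv {n : ℕ} (a y : Fin n → ℝ) (i : Fin n) : ℝ := a i - tc a y * (y i / nrm y)

/-- `‖𝔖‖² := g^{ij}s_is_j`. -/
def nS2 {n : ℕ} (φ : ℝ → ℝ → ℝ → ℝ → ℝ) (a x y : Fin n → ℝ) : ℝ :=
  ∑ i, ∑ j, gInv φ a x y i j * sv x y i * sv x y j
/-- `‖ℜ‖² := g^{ij}s_it_j`. -/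
def nR2 {n : ℕ} (φ : ℝ → ℝ → ℝ → ℝ → ℝ) (a x y : Fin n → ℝ) : ℝ :=
  ∑ i, ∑ j, gInv φ a x y i j * sv x y i * tv a y j
/-- `‖𝔗‖² := g^{ij}t_it_j`. -/
def nT2 {n : ℕ} (φ : ℝ → ℝ → ℝ → ℝ → ℝ) (a x y : Fin n → ℝ) : ℝ :=
  ∑ i, ∑ j, gInv φ a x y i j * tv a y i * tv a y j

/-! The scalars `σ₁, …, σ₁₁` as functions of `(u,s,v,t)`.  Subscripts on `φ`
denote partial derivatives; `φ_{st}` is `pdt (pds φ)` (first `s`, then `t`),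
`φ_{ts}` is `pds (pdt φ)`, etc. -/

def sig1 (φ : ℝ → ℝ → ℝ → ℝ → ℝ) (u s v t : ℝ) : ℝ :=
  φ u s v t - s * pds φ u s v t - t * pdt φ u s v t

def sig2 (φ : ℝ → ℝ → ℝ → ℝ → ℝ) (u s v t : ℝ) : ℝ :=
  sig1 φ u s v t * pds φ u s v t - s * φ u s v t * pds (pds φ) u s v t -
    t * φ u s v t * pds (pdt φ) u s v t

def sig3 (φ : ℝ → ℝ → ℝ → ℝ → ℝ) (u s v t : ℝ) : ℝ :=
  sig1 φ u s v t * pdt φ u s v t - s * φ u s v t * pdt (pds φ) u s v t -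
    t * φ u s v t * pdt (pdt φ) u s v t

def sig4 (φ : ℝ → ℝ → ℝ → ℝ → ℝ) (u s v t : ℝ) : ℝ :=
  3 * pds φ u s v t * pds (pds φ) u s v t + φ u s v t * pds (pds (pds φ)) u s v t

def sig5 (φ : ℝ → ℝ → ℝ → ℝ → ℝ) (u s v t : ℝ) : ℝ :=
  3 * pdt φ u s v t * pdt (pdt φ) u s v t + φ u s v t * pdt (pdt (pdt φ)) u s v t

def sig6 (φ : ℝ → ℝ → ℝ → ℝ → ℝ) (u s v t : ℝ) : ℝ :=
  2 * pds φ u s v t * pdt (pds φ) u s v t + pdt φ u s v t * pds (pds φ) u s v t +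
    φ u s v t * pdt (pds (pds φ)) u s v t

def sig7 (φ : ℝ → ℝ → ℝ → ℝ → ℝ) (u s v t : ℝ) : ℝ :=
  2 * pdt φ u s v t * pds (pdt φ) u s v t + pds φ u s v t * pdt (pdt φ) u s v t +
    φ u s v t * pds (pdt (pdt φ)) u s v t

def sig8 (φ : ℝ → ℝ → ℝ → ℝ → ℝ) (u s v t : ℝ) : ℝ :=
  φ u s v t * (sig1 φ u s v t * sig4 φ u s v t - 3 * sig2 φ u s v t * pds (pds φ) u s v t)

def sig9 (φ : ℝ → ℝ → ℝ → ℝ → ℝ) (u s v t : ℝ) : ℝ :=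
  φ u s v t * (sig1 φ u s v t * sig5 φ u s v t - 3 * sig3 φ u s v t * pdt (pdt φ) u s v t)

def sig10 (φ : ℝ → ℝ → ℝ → ℝ → ℝ) (u s v t : ℝ) : ℝ :=
  φ u s v t * (sig1 φ u s v t * sig6 φ u s v t - 2 * sig2 φ u s v t * pdt (pds φ) u s v t -
    sig3 φ u s v t * pds (pds φ) u s v t)

def sig11 (φ : ℝ → ℝ → ℝ → ℝ → ℝ) (u s v t : ℝ) : ℝ :=
  φ u s v t * (sig1 φ u s v t * sig7 φ u s v t - 2 * sig3 φ u s v t * pds (pdt φ) u s v t -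
    sig2 φ u s v t * pdt (pdt φ) u s v t)

/-- The scalar `H` of Lemma 3.2. -/
def Hc {n : ℕ} (φ : ℝ → ℝ → ℝ → ℝ → ℝ) (a x y : Fin n → ℝ) : ℝ :=
  ((n : ℝ) + 1) * (ev (pds φ) a x y / ev φ a x y +
      ev (pds (sig1 φ)) a x y / ev (sig1 φ) a x y) +
  nS2 φ a x y * (ev (pds (pds (pds φ))) a x y -
      3 * ev (pds (sig1 φ)) a x y * ev (pds (pds φ)) a x y / ev (sig1 φ) a x y) * ev φ a x y +
  2 * nR2 φ a x y * (ev (pdt (pds (pds φ))) a x y -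
      (2 * ev (pds (sig1 φ)) a x y * ev (pdt (pds φ)) a x y +
        ev (pdt (sig1 φ)) a x y * ev (pds (pds φ)) a x y) / ev (sig1 φ) a x y) * ev φ a x y +
  nT2 φ a x y * (ev (pds (pdt (pdt φ))) a x y -
      (2 * ev (pdt (sig1 φ)) a x y * ev (pds (pdt φ)) a x y +
        ev (pds (sig1 φ)) a x y * ev (pdt (pdt φ)) a x y) / ev (sig1 φ) a x y) * ev φ a x y

/-- The scalar `K` of Lemma 3.2. -/
def Kc {n : ℕ} (φ : ℝ → ℝ → ℝ → ℝ → ℝ) (a x y : Fin n → ℝ) : ℝ :=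
  ((n : ℝ) + 1) * (ev (pdt φ) a x y / ev φ a x y +
      ev (pdt (sig1 φ)) a x y / ev (sig1 φ) a x y) +
  nT2 φ a x y * (ev (pdt (pdt (pdt φ))) a x y -
      3 * ev (pdt (sig1 φ)) a x y * ev (pdt (pdt φ)) a x y / ev (sig1 φ) a x y) * ev φ a x y +
  nS2 φ a x y * (ev (pdt (pds (pds φ))) a x y -
      (2 * ev (pds (sig1 φ)) a x y * ev (pdt (pds φ)) a x y +
        ev (pdt (sig1 φ)) a x y * ev (pds (pds φ)) a x y) / ev (sig1 φ) a x y) * ev φ a x y +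
  2 * nR2 φ a x y * (ev (pds (pdt (pdt φ))) a x y -
      (2 * ev (pdt (sig1 φ)) a x y * ev (pds (pdt φ)) a x y +
        ev (pds (sig1 φ)) a x y * ev (pdt (pdt φ)) a x y) / ev (sig1 φ) a x y) * ev φ a x y

/-- The scalar `M` appearing in the proof of Theorem 1.1. -/
def Mc {n : ℕ} (φ : ℝ → ℝ → ℝ → ℝ → ℝ) (a x y : Fin n → ℝ) : ℝ :=
  ev (sig2 φ) a x y * (ev (sig1 φ) a x y * ((n : ℝ) - 2) * ev φ a x y +
      (ip a a - tc a y ^ 2) * ev φ a x y * ev (pdt (pdt φ)) a x y +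
      (vc a x - sc x y * tc a y) * ev φ a x y * ev (pdt (pds φ)) a x y) -
  ev (sig3 φ) a x y * ((vc a x - sc x y * tc a y) * ev φ a x y * ev (pds (pds φ)) a x y +
      (ip a a - tc a y ^ 2) * ev φ a x y * ev (pdt (pds φ)) a x y) +
  ev (sig10 φ) a x y * (vc a x - sc x y * tc a y) -
  ev (sig11 φ) a x y * (ip a a - tc a y ^ 2)

/-- The scalar `N` appearing in the proof of Theorem 1.1. -/
def Nc {n : ℕ} (φ : ℝ → ℝ → ℝ → ℝ → ℝ) (a x y : Fin n → ℝ) : ℝ :=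
  ev (sig2 φ) a x y * ((vc a x - sc x y * tc a y) * ev φ a x y * ev (pdt (pdt φ)) a x y +
      (uu x - sc x y ^ 2) * ev φ a x y * ev (pdt (pds φ)) a x y) -
  ev (sig3 φ) a x y * (ev (sig1 φ) a x y * ((n : ℝ) - 2) * ev φ a x y +
      (uu x - sc x y ^ 2) * ev φ a x y * ev (pds (pds φ)) a x y +
      (vc a x - sc x y * tc a y) * ev φ a x y * ev (pdt (pds φ)) a x y) +
  ev (sig10 φ) a x y * (uu x - sc x y ^ 2) -
  ev (sig11 φ) a x y * (vc a x - sc x y * tc a y)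

end GSSFinsler

namespace GSSFinsler

/-! ### Smooth functions of four variables -/

/-- A curried function of four real variables is `C^∞`. -/
def Sm (f : ℝ → ℝ → ℝ → ℝ → ℝ) : Prop :=
  ContDiff ℝ (⊤ : ℕ∞) (fun p : ℝ × ℝ × ℝ × ℝ => f p.1 p.2.1 p.2.2.1 p.2.2.2)

/-- The uncurried form of a function of four real variables. -/
def unc (f : ℝ → ℝ → ℝ → ℝ → ℝ) (p : ℝ × ℝ × ℝ × ℝ) : ℝ := f p.1 p.2.1 p.2.2.1 p.2.2.2

lemma Sm.differentiable {f : ℝ → ℝ → ℝ → ℝ → ℝ} (hf : Sm f) : Differentiable ℝ (unc f) :=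
  ContDiff.differentiable hf (by simp)

lemma pds_eq {f : ℝ → ℝ → ℝ → ℝ → ℝ} (hf : Sm f) (p : ℝ × ℝ × ℝ × ℝ) :
    unc (pds f) p = fderiv ℝ (unc f) p (0, 1, 0, 0) := by
  obtain ⟨u, s, v, t⟩ := p
  have h1 : HasDerivAt (fun z : ℝ => ((u, z, v, t) : ℝ × ℝ × ℝ × ℝ)) (0, 1, 0, 0) s :=
    (hasDerivAt_const s u).prodMk ((hasDerivAt_id s).prodMk
      ((hasDerivAt_const s v).prodMk (hasDerivAt_const s t)))
  have h2 := (hf.differentiable (u, s, v, t)).hasFDerivAt.comp_hasDerivAt s h1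
  exact h2.deriv

lemma pdt_eq {f : ℝ → ℝ → ℝ → ℝ → ℝ} (hf : Sm f) (p : ℝ × ℝ × ℝ × ℝ) :
    unc (pdt f) p = fderiv ℝ (unc f) p (0, 0, 0, 1) := by
  obtain ⟨u, s, v, t⟩ := p
  have h1 : HasDerivAt (fun z : ℝ => ((u, s, v, z) : ℝ × ℝ × ℝ × ℝ)) (0, 0, 0, 1) t :=
    (hasDerivAt_const t u).prodMk ((hasDerivAt_const t s).prodMk
      ((hasDerivAt_const t v).prodMk (hasDerivAt_id t)))
  have h2 := (hf.differentiable (u, s, v, t)).hasFDerivAt.comp_hasDerivAt t h1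
  exact h2.deriv

lemma Sm.contDiff_fderiv {f : ℝ → ℝ → ℝ → ℝ → ℝ} (hf : Sm f) :
    ContDiff ℝ (⊤ : ℕ∞) (fderiv ℝ (unc f)) :=
  ContDiff.fderiv_right (m := ((⊤ : ℕ∞) : WithTop ℕ∞)) (n := ((⊤ : ℕ∞) : WithTop ℕ∞)) hf (by simp)

lemma Sm.pds {f : ℝ → ℝ → ℝ → ℝ → ℝ} (hf : Sm f) : Sm (pds f) := by
  have h : ContDiff ℝ (⊤ : ℕ∞) (fun p => fderiv ℝ (unc f) p (0, 1, 0, 0)) :=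
    hf.contDiff_fderiv.clm_apply contDiff_const
  have e : unc (GSSFinsler.pds f) = fun p => fderiv ℝ (unc f) p (0, 1, 0, 0) :=
    funext (pds_eq hf)
  rw [← e] at h
  exact h

lemma Sm.pdt {f : ℝ → ℝ → ℝ → ℝ → ℝ} (hf : Sm f) : Sm (pdt f) := by
  have h : ContDiff ℝ (⊤ : ℕ∞) (fun p => fderiv ℝ (unc f) p (0, 0, 0, 1)) :=
    hf.contDiff_fderiv.clm_apply contDiff_const
  have e : unc (GSSFinsler.pdt f) = fun p => fderiv ℝ (unc f) p (0, 0, 0, 1) :=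
    funext (pdt_eq hf)
  rw [← e] at h
  exact h

/-- Symmetry of the second derivatives, `φ_ts = φ_st`. -/
lemma pds_pdt {f : ℝ → ℝ → ℝ → ℝ → ℝ} (hf : Sm f) : pds (pdt f) = pdt (pds f) := by
  have key : unc (pds (pdt f)) = unc (pdt (pds f)) := by
    funext p
    rw [pds_eq hf.pdt, pdt_eq hf.pds, funext (pds_eq hf), funext (pdt_eq hf)]
    have hd : DifferentiableAt ℝ (fderiv ℝ (unc f)) p :=
      (hf.contDiff_fderiv.differentiable (by simp)) p
    have hsym : IsSymmSndFDerivAt ℝ (unc f) p :=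
      ContDiffAt.isSymmSndFDerivAt (n := ((⊤ : ℕ∞) : WithTop ℕ∞)) (ContDiff.contDiffAt hf)
        (by simpa using WithTop.coe_le_coe.mpr (le_top : (2 : ℕ∞) ≤ ⊤))
    have e1 : ∀ v w, fderiv ℝ (fun q => fderiv ℝ (unc f) q v) p w
        = fderiv ℝ (fderiv ℝ (unc f)) p w v := by
      intro v w
      rw [fderiv_clm_apply hd (differentiableAt_const v)]
      simp
    rw [e1, e1]
    exact hsym _ _
  funext u s v t
  exact congrFun key (u, s, v, t)

lemma Sm.sig1 {f : ℝ → ℝ → ℝ → ℝ → ℝ} (hf : Sm f) : Sm (sig1 f) := by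
  have h1 := hf.pds
  have h2 := hf.pdt
  unfold Sm at *
  unfold GSSFinsler.sig1
  fun_prop

lemma hasDerivAt_s {f : ℝ → ℝ → ℝ → ℝ → ℝ} (hf : Sm f) (u s v t : ℝ) :
    HasDerivAt (fun z => f u z v t) (pds f u s v t) s := by
  have h1 : HasDerivAt (fun z : ℝ => ((u, z, v, t) : ℝ × ℝ × ℝ × ℝ)) (0, 1, 0, 0) s :=
    (hasDerivAt_const s u).prodMk ((hasDerivAt_id s).prodMk
      ((hasDerivAt_const s v).prodMk (hasDerivAt_const s t)))
  exact ((hf.differentiable (u, s, v, t)).hasFDerivAt.comp_hasDerivAt s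
    h1).differentiableAt.hasDerivAt

lemma hasDerivAt_t {f : ℝ → ℝ → ℝ → ℝ → ℝ} (hf : Sm f) (u s v t : ℝ) :
    HasDerivAt (fun z => f u s v z) (pdt f u s v t) t := by
  have h1 : HasDerivAt (fun z : ℝ => ((u, s, v, z) : ℝ × ℝ × ℝ × ℝ)) (0, 0, 0, 1) t :=
    (hasDerivAt_const t u).prodMk ((hasDerivAt_const t s).prodMk
      ((hasDerivAt_const t v).prodMk (hasDerivAt_id t)))
  exact ((hf.differentiable (u, s, v, t)).hasFDerivAt.comp_hasDerivAt t
    h1).differentiableAt.hasDerivAt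

/-- `σ_{1s} = -s φ_ss - t φ_st`. -/
lemma pds_sig1 {f : ℝ → ℝ → ℝ → ℝ → ℝ} (hf : Sm f) (u s v t : ℝ) :
    pds (sig1 f) u s v t = - s * pds (pds f) u s v t - t * pdt (pds f) u s v t := by
  have h := ((hasDerivAt_s hf u s v t).sub ((hasDerivAt_id s).mul (hasDerivAt_s hf.pds u s v t))).sub
    ((hasDerivAt_s hf.pdt u s v t).const_mul t)
  have e := h.deriv
  rw [pds_pdt hf] at e
  refine Eq.trans ?_ (e.trans ?_)
  · rfl
  · simp

/-- `σ_{1t} = -s φ_st - t φ_tt`. -/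
lemma pdt_sig1 {f : ℝ → ℝ → ℝ → ℝ → ℝ} (hf : Sm f) (u s v t : ℝ) :
    pdt (sig1 f) u s v t = - s * pdt (pds f) u s v t - t * pdt (pdt f) u s v t := by
  have h := ((hasDerivAt_t hf u s v t).sub ((hasDerivAt_t hf.pds u s v t).const_mul s)).sub
    ((hasDerivAt_id t).mul (hasDerivAt_t hf.pdt u s v t))
  have e := h.deriv
  refine Eq.trans ?_ (e.trans ?_)
  · rfl
  · simp; ring

/-! ### Gradients in the coordinates of `y` -/

variable {n : ℕ}

/-- `f` is differentiable at `y` with partial derivatives `c k`. -/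
def HasGrad (f : (Fin n → ℝ) → ℝ) (c : Fin n → ℝ) (y : Fin n → ℝ) : Prop :=
  ∃ L : (Fin n → ℝ) →L[ℝ] ℝ, HasFDerivAt f L y ∧ ∀ k, L (bvec n k) = c k

lemma HasGrad.fderiv {f : (Fin n → ℝ) → ℝ} {c y : Fin n → ℝ} (h : HasGrad f c y) (k : Fin n) :
    fderiv ℝ f y (bvec n k) = c k := by
  obtain ⟨L, hL, hc⟩ := h
  rw [hL.fderiv, hc]

lemma HasGrad.congr {f : (Fin n → ℝ) → ℝ} {c d y : Fin n → ℝ} (h : HasGrad f c y)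
    (e : ∀ k, c k = d k) : HasGrad f d y := by
  obtain ⟨L, hL, hc⟩ := h
  exact ⟨L, hL, fun k => (hc k).trans (e k)⟩

lemma HasGrad.add {f g : (Fin n → ℝ) → ℝ} {c d y : Fin n → ℝ} (hf : HasGrad f c y)
    (hg : HasGrad g d y) : HasGrad (fun z => f z + g z) (fun k => c k + d k) y := by
  obtain ⟨L, hL, hc⟩ := hf
  obtain ⟨M, hM, hd⟩ := hg
  exact ⟨L + M, hL.add hM, fun k => by simp [hc, hd]⟩

lemma HasGrad.sub {f g : (Fin n → ℝ) → ℝ} {c d y : Fin n → ℝ} (hf : HasGrad f c y)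
    (hg : HasGrad g d y) : HasGrad (fun z => f z - g z) (fun k => c k - d k) y := by
  obtain ⟨L, hL, hc⟩ := hf
  obtain ⟨M, hM, hd⟩ := hg
  exact ⟨L - M, hL.sub hM, fun k => by simp [hc, hd]⟩

lemma HasGrad.mul {f g : (Fin n → ℝ) → ℝ} {c d y : Fin n → ℝ} (hf : HasGrad f c y)
    (hg : HasGrad g d y) :
    HasGrad (fun z => f z * g z) (fun k => f y * d k + g y * c k) y := by
  obtain ⟨L, hL, hc⟩ := hf
  obtain ⟨M, hM, hd⟩ := hg
  exact ⟨f y • M + g y • L, hL.mul hM, fun k => by simp [hc, hd]⟩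

lemma HasGrad.inv {f : (Fin n → ℝ) → ℝ} {c y : Fin n → ℝ} (hf : HasGrad f c y)
    (h0 : f y ≠ 0) : HasGrad (fun z => (f z)⁻¹) (fun k => - c k / f y ^ 2) y := by
  obtain ⟨L, hL, hc⟩ := hf
  refine ⟨_, (hasDerivAt_inv h0).comp_hasFDerivAt y hL, fun k => ?_⟩
  simp [hc]
  ring

lemma hasGrad_const (b : ℝ) (y : Fin n → ℝ) : HasGrad (fun _ => b) (fun _ => 0) y :=
  ⟨0, hasFDerivAt_const b y, fun k => by simp⟩

lemma hasGrad_coord (i : Fin n) (y : Fin n → ℝ) :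
    HasGrad (fun z => z i) (fun k => if i = k then 1 else 0) y :=
  ⟨ContinuousLinearMap.proj i, hasFDerivAt_apply i y, fun k => by
    simp [bvec, Pi.single_apply]⟩

lemma HasGrad.sum {ι : Type*} (S : Finset ι) {f : ι → (Fin n → ℝ) → ℝ} {c : ι → Fin n → ℝ}
    {y : Fin n → ℝ} (h : ∀ i, HasGrad (f i) (c i) y) :
    HasGrad (fun z => ∑ i ∈ S, f i z) (fun k => ∑ i ∈ S, c i k) y := by
  choose L hL hc using h
  refine ⟨∑ i ∈ S, L i, HasFDerivAt.fun_sum fun i _ => hL i, fun k => ?_⟩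
  simp [hc]

lemma hasGrad_ip (b y : Fin n → ℝ) : HasGrad (fun z => ip b z) b y := by
  have h := HasGrad.sum Finset.univ (y := y) fun i : Fin n =>
    (hasGrad_const (b i) y).mul (hasGrad_coord i y)
  refine HasGrad.congr (f := fun z => ip b z) h fun k => ?_
  simp

lemma hasGrad_ip_self (y : Fin n → ℝ) : HasGrad (fun z => ip z z) (fun k => 2 * y k) y := by
  have h := HasGrad.sum Finset.univ (y := y) fun i : Fin n =>
    (hasGrad_coord i y).mul (hasGrad_coord i y)
  refine HasGrad.congr (f := fun z => ip z z) h fun k => ?_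
  simp [Finset.sum_add_distrib]
  ring

lemma ip_self_pos {y : Fin n → ℝ} (hy : y ≠ 0) : 0 < ip y y := by
  obtain ⟨i, hi⟩ := Function.ne_iff.mp hy
  refine Finset.sum_pos' (fun j _ => mul_self_nonneg _) ⟨i, Finset.mem_univ i, ?_⟩
  exact mul_self_pos.mpr hi

lemma nrm_pos {y : Fin n → ℝ} (hy : y ≠ 0) : 0 < nrm y := Real.sqrt_pos.mpr (ip_self_pos hy)

lemma hasGrad_nrm {y : Fin n → ℝ} (hy : y ≠ 0) : HasGrad nrm (fun k => y k / nrm y) y := by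
  obtain ⟨L, hL, hc⟩ := hasGrad_ip_self y
  refine ⟨_, hL.sqrt (ip_self_pos hy).ne', fun k => ?_⟩
  have := (nrm_pos hy).ne'
  simp only [smul_apply, hc, smul_eq_mul]
  change 1 / (2 * nrm y) * (2 * y k) = _
  field_simp

/-- The projection `P_{ij} = δ_{ij} - ρ_i ρ_j` onto the orthogonal complement of `y`. -/
def Pm (y : Fin n → ℝ) (i j : Fin n) : ℝ :=
  (if i = j then 1 else 0) - y i / nrm y * (y j / nrm y)

lemma hasGrad_rho {y : Fin n → ℝ} (hy : y ≠ 0) (i : Fin n) :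
    HasGrad (fun z => z i / nrm z) (fun k => Pm y i k / nrm y) y := by
  have h := (hasGrad_coord i y).mul ((hasGrad_nrm hy).inv (nrm_pos hy).ne')
  refine HasGrad.congr (f := fun z => z i / nrm z) h fun k => ?_
  have := (nrm_pos hy).ne'
  unfold Pm
  field_simp
  ring

lemma hasGrad_sc (x : Fin n → ℝ) {y : Fin n → ℝ} (hy : y ≠ 0) :
    HasGrad (fun z => sc x z) (fun k => sv x y k / nrm y) y := by
  have h := (hasGrad_ip x y).mul ((hasGrad_nrm hy).inv (nrm_pos hy).ne')
  refine HasGrad.congr (f := fun z => sc x z) h fun k => ?_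
  have := (nrm_pos hy).ne'
  unfold sv sc
  field_simp
  ring

lemma hasGrad_sv (x : Fin n → ℝ) {y : Fin n → ℝ} (hy : y ≠ 0) (i : Fin n) :
    HasGrad (fun z => sv x z i)
      (fun k => -(sv x y k * (y i / nrm y) + sc x y * Pm y i k) / nrm y) y := by
  have h := (hasGrad_const (x i) y).sub ((hasGrad_sc x hy).mul (hasGrad_rho hy i))
  refine HasGrad.congr (f := fun z => sv x z i) h fun k => ?_
  ring

lemma hasGrad_ev {f : ℝ → ℝ → ℝ → ℝ → ℝ} (hf : Sm f) (a x : Fin n → ℝ) {y : Fin n → ℝ}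
    (hy : y ≠ 0) :
    HasGrad (fun z => ev f a x z)
      (fun k => (ev (pds f) a x y * sv x y k + ev (pdt f) a x y * tv a y k) / nrm y) y := by
  obtain ⟨L, hL, hc⟩ := hasGrad_sc x hy
  obtain ⟨M, hM, hd⟩ := hasGrad_sc a hy
  have h1 := (hasFDerivAt_const (uu x) y).prodMk (hL.prodMk
    ((hasFDerivAt_const (vc a x) y).prodMk hM))
  have h2 := HasFDerivAt.comp (g := unc f) y
    (hf.differentiable (uu x, sc x y, vc a x, sc a y)).hasFDerivAt h1
  refine ⟨_, h2, fun k => ?_⟩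
  have e1 := pds_eq hf (uu x, sc x y, vc a x, sc a y)
  have e2 := pdt_eq hf (uu x, sc x y, vc a x, sc a y)
  set D := fderiv ℝ (unc f) (uu x, sc x y, vc a x, sc a y) with hD
  change D (0, L (bvec n k), 0, M (bvec n k)) = _
  have e3 : ((0, L (bvec n k), 0, M (bvec n k)) : ℝ × ℝ × ℝ × ℝ)
      = L (bvec n k) • (0, 1, 0, 0) + M (bvec n k) • (0, 0, 0, 1) := by simp
  rw [e3, map_add, map_smul, map_smul, ← e1, ← e2, hc, hd]
  change sv x y k / nrm y * ev (pds f) a x y + tv a y k / nrm y * ev (pdt f) a x y = _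
  ring

/-! ### The fundamental tensor and the Cartan tensor -/

/-- The partial derivative `F_i = φ ρ_i + φ_s s_i + φ_t t_i` of `F`. -/
def Fi (φ : ℝ → ℝ → ℝ → ℝ → ℝ) (a x y : Fin n → ℝ) (i : Fin n) : ℝ :=
  ev φ a x y * (y i / nrm y) + ev (pds φ) a x y * sv x y i + ev (pdt φ) a x y * tv a y i

/-- The rescaled Hessian `A_{ij} = r F_{ij}` of `F`. -/
def Am (φ : ℝ → ℝ → ℝ → ℝ → ℝ) (a x y : Fin n → ℝ) (i j : Fin n) : ℝ :=
  ev (sig1 φ) a x y * Pm y i j + ev (pds (pds φ)) a x y * (sv x y i * sv x y j) +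
    ev (pdt (pds φ)) a x y * (sv x y i * tv a y j + tv a y i * sv x y j) +
    ev (pdt (pdt φ)) a x y * (tv a y i * tv a y j)

lemma hasGrad_tv (a : Fin n → ℝ) {y : Fin n → ℝ} (hy : y ≠ 0) (i : Fin n) :
    HasGrad (fun z => tv a z i)
      (fun k => -(tv a y k * (y i / nrm y) + tc a y * Pm y i k) / nrm y) y :=
  hasGrad_sv a hy i

lemma hasGrad_Fm {φ : ℝ → ℝ → ℝ → ℝ → ℝ} (hφ : Sm φ) (a x : Fin n → ℝ) {y : Fin n → ℝ}
    (hy : y ≠ 0) : HasGrad (fun z => Fm φ a x z) (Fi φ a x y) y := by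
  have h := (hasGrad_nrm hy).mul (hasGrad_ev hφ a x hy)
  refine HasGrad.congr (f := fun z => Fm φ a x z) h fun k => ?_
  have := (nrm_pos hy).ne'
  unfold Fi
  field_simp
  ring

lemma ev_sig1 (φ : ℝ → ℝ → ℝ → ℝ → ℝ) (a x y : Fin n → ℝ) :
    ev (sig1 φ) a x y = ev φ a x y - sc x y * ev (pds φ) a x y - tc a y * ev (pdt φ) a x y := rfl

lemma ev_pds_sig1 {φ : ℝ → ℝ → ℝ → ℝ → ℝ} (hφ : Sm φ) (a x y : Fin n → ℝ) :
    ev (pds (sig1 φ)) a x y =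
      - sc x y * ev (pds (pds φ)) a x y - tc a y * ev (pdt (pds φ)) a x y := pds_sig1 hφ _ _ _ _

lemma ev_pdt_sig1 {φ : ℝ → ℝ → ℝ → ℝ → ℝ} (hφ : Sm φ) (a x y : Fin n → ℝ) :
    ev (pdt (sig1 φ)) a x y =
      - sc x y * ev (pdt (pds φ)) a x y - tc a y * ev (pdt (pdt φ)) a x y := pdt_sig1 hφ _ _ _ _

lemma hasGrad_Fi {φ : ℝ → ℝ → ℝ → ℝ → ℝ} (hφ : Sm φ) (a x : Fin n → ℝ) {y : Fin n → ℝ}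
    (hy : y ≠ 0) (i : Fin n) :
    HasGrad (fun z => Fi φ a x z i) (fun k => Am φ a x y i k / nrm y) y := by
  have h := (((hasGrad_ev hφ a x hy).mul (hasGrad_rho hy i)).add
    ((hasGrad_ev hφ.pds a x hy).mul (hasGrad_sv x hy i))).add
    ((hasGrad_ev hφ.pdt a x hy).mul (hasGrad_tv a hy i))
  refine HasGrad.congr (f := fun z => Fi φ a x z i) h fun k => ?_
  unfold Am
  rw [pds_pdt hφ, ev_sig1]
  ring

lemma Pm_comm (y : Fin n → ℝ) (i j : Fin n) : Pm y i j = Pm y j i := by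
  unfold Pm
  simp only [eq_comm (a := i)]
  ring

lemma hasGrad_Pm {y : Fin n → ℝ} (hy : y ≠ 0) (i j : Fin n) :
    HasGrad (fun z => Pm z i j)
      (fun k => -(Pm y i k * (y j / nrm y) + Pm y j k * (y i / nrm y)) / nrm y) y := by
  have h := (hasGrad_const (if i = j then 1 else 0) y).sub
    ((hasGrad_rho hy i).mul (hasGrad_rho hy j))
  refine HasGrad.congr (f := fun z => Pm z i j) h fun k => ?_
  ring

lemma Am_comm (φ : ℝ → ℝ → ℝ → ℝ → ℝ) (a x y : Fin n → ℝ) (i j : Fin n) :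
    Am φ a x y i j = Am φ a x y j i := by
  unfold Am
  rw [Pm_comm]
  ring

/-- The covector `m_k = σ_{1s} s_k + σ_{1t} t_k`. -/
def mk (φ : ℝ → ℝ → ℝ → ℝ → ℝ) (a x y : Fin n → ℝ) (k : Fin n) : ℝ :=
  ev (pds (sig1 φ)) a x y * sv x y k + ev (pdt (sig1 φ)) a x y * tv a y k

/-- The symmetric cubic form in `s, t` with the third derivatives of `φ` as coefficients. -/
def cub (φ : ℝ → ℝ → ℝ → ℝ → ℝ) (a x y : Fin n → ℝ) (i j k : Fin n) : ℝ :=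
  ev (pds (pds (pds φ))) a x y * (sv x y i * sv x y j * sv x y k) +
  ev (pdt (pds (pds φ))) a x y * (sv x y i * sv x y j * tv a y k +
    sv x y i * tv a y j * sv x y k + tv a y i * sv x y j * sv x y k) +
  ev (pds (pdt (pdt φ))) a x y * (sv x y i * tv a y j * tv a y k +
    tv a y i * sv x y j * tv a y k + tv a y i * tv a y j * sv x y k) +
  ev (pdt (pdt (pdt φ))) a x y * (tv a y i * tv a y j * tv a y k)

lemma hasGrad_Am {φ : ℝ → ℝ → ℝ → ℝ → ℝ} (hφ : Sm φ) (a x : Fin n → ℝ) {y : Fin n → ℝ}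
    (hy : y ≠ 0) (i j : Fin n) :
    HasGrad (fun z => Am φ a x z i j)
      (fun k => (Pm y i j * mk φ a x y k + Pm y i k * mk φ a x y j + Pm y j k * mk φ a x y i +
        cub φ a x y i j k - y i / nrm y * Am φ a x y j k - y j / nrm y * Am φ a x y i k)
          / nrm y) y := by
  have hs := fun i => hasGrad_sv x hy i
  have ht := fun i => hasGrad_tv a hy i
  have h := ((((hasGrad_ev hφ.sig1 a x hy).mul (hasGrad_Pm hy i j)).add
    ((hasGrad_ev hφ.pds.pds a x hy).mul ((hs i).mul (hs j)))).add
    ((hasGrad_ev hφ.pds.pdt a x hy).mul (((hs i).mul (ht j)).add ((ht i).mul (hs j))))).add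
    ((hasGrad_ev hφ.pdt.pdt a x hy).mul ((ht i).mul (ht j)))
  refine HasGrad.congr (f := fun z => Am φ a x z i j) h fun k => ?_
  have e1 : pds (pdt (pds φ)) = pdt (pds (pds φ)) := pds_pdt hφ.pds
  have e2 : pds (pdt (pdt φ)) = pdt (pdt (pds φ)) := by rw [pds_pdt hφ.pdt, pds_pdt hφ]
  unfold Am mk cub
  simp only [e1, e2, ev_pds_sig1 hφ, ev_pdt_sig1 hφ]
  ring

lemma eventually_ne_zero {y : Fin n → ℝ} (hy : y ≠ 0) : ∀ᶠ z in nhds y, z ≠ 0 :=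
  isOpen_ne.mem_nhds hy

lemma gm_eq {φ : ℝ → ℝ → ℝ → ℝ → ℝ} (hφ : Sm φ) (a x : Fin n → ℝ) {y : Fin n → ℝ}
    (hy : y ≠ 0) (i j : Fin n) :
    gm φ a x y i j = Fi φ a x y i * Fi φ a x y j + ev φ a x y * Am φ a x y i j := by
  have h1 : (fun z => fderiv ℝ (fun w => (Fm φ a x w)^2) z (bvec n j)) =ᶠ[nhds y]
      fun z => 2 * (Fm φ a x z * Fi φ a x z j) := by
    filter_upwards [eventually_ne_zero hy] with z hz
    have h := ((hasGrad_Fm hφ a x hz).mul (hasGrad_Fm hφ a x hz)).fderiv j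
    simp only [pow_two]
    rw [h]
    ring
  have h2 := ((hasGrad_const 2 y).mul ((hasGrad_Fm hφ a x hy).mul (hasGrad_Fi hφ a x hy j))).fderiv i
  unfold gm
  rw [h1.fderiv_eq, h2, Am_comm φ a x y j i]
  have := (nrm_pos hy).ne'
  change 1 / 2 * (2 * (nrm y * ev φ a x y * (Am φ a x y i j / nrm y) + _) + _) = _
  field_simp
  ring

lemma cart_eq {φ : ℝ → ℝ → ℝ → ℝ → ℝ} (hφ : Sm φ) (a x : Fin n → ℝ) {y : Fin n → ℝ}
    (hy : y ≠ 0) (i j k : Fin n) :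
    cart φ a x y i j k = 1 / (2 * nrm y) *
      ((ev (pds φ) a x y * sv x y k + ev (pdt φ) a x y * tv a y k) * Am φ a x y i j +
       (ev (pds φ) a x y * sv x y i + ev (pdt φ) a x y * tv a y i) * Am φ a x y j k +
       (ev (pds φ) a x y * sv x y j + ev (pdt φ) a x y * tv a y j) * Am φ a x y i k +
       ev φ a x y * (Pm y i j * mk φ a x y k + Pm y i k * mk φ a x y j + Pm y j k * mk φ a x y i +
        cub φ a x y i j k)) := by
  have h1 : (fun z => gm φ a x z i j) =ᶠ[nhds y]
      fun z => Fi φ a x z i * Fi φ a x z j + ev φ a x z * Am φ a x z i j := by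
    filter_upwards [eventually_ne_zero hy] with z hz
    exact gm_eq hφ a x hz i j
  have h2 := (((hasGrad_Fi hφ a x hy i).mul (hasGrad_Fi hφ a x hy j)).add
    ((hasGrad_ev hφ a x hy).mul (hasGrad_Am hφ a x hy i j))).fderiv k
  unfold cart
  rw [h1.fderiv_eq, h2]
  have := (nrm_pos hy).ne'
  unfold Fi
  field_simp
  ring

/-! ### Traces with respect to the inverse metric -/

lemma sum_sv_mul {x y : Fin n → ℝ} (hy : y ≠ 0) : ∑ i, sv x y i * (y i / nrm y) = 0 := by
  have h0 := (nrm_pos hy).ne'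
  have h1 : nrm y ^ 2 = ip y y := Real.sq_sqrt (ip_self_pos hy).le
  have h2 : ∑ i, sv x y i * (y i / nrm y) = ip x y / nrm y - sc x y * (ip y y / nrm y ^ 2) := by
    unfold sv
    simp only [ip, Finset.sum_div, Finset.mul_sum, ← Finset.sum_sub_distrib]
    refine Finset.sum_congr rfl fun i _ => ?_
    field_simp
  rw [h2, ← h1, div_self (pow_ne_zero 2 h0)]
  unfold sc
  ring

lemma sum_rho_sq {y : Fin n → ℝ} (hy : y ≠ 0) : ∑ i, y i / nrm y * (y i / nrm y) = 1 := by
  have h0 := (nrm_pos hy).ne'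
  have h1 : nrm y ^ 2 = ip y y := Real.sq_sqrt (ip_self_pos hy).le
  have h2 : ∑ i, y i / nrm y * (y i / nrm y) = ip y y / nrm y ^ 2 := by
    simp only [ip, Finset.sum_div]
    refine Finset.sum_congr rfl fun i _ => ?_
    field_simp
  rw [h2, ← h1, div_self (pow_ne_zero 2 h0)]

lemma sum_Pm_rho {y : Fin n → ℝ} (hy : y ≠ 0) (i : Fin n) :
    ∑ j, Pm y i j * (y j / nrm y) = 0 := by
  have : ∀ j, Pm y i j * (y j / nrm y) = (if i = j then y j / nrm y else 0)
      - y i / nrm y * (y j / nrm y * (y j / nrm y)) := by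
    intro j
    unfold Pm
    split_ifs <;> ring
  simp only [this, Finset.sum_sub_distrib, ← Finset.mul_sum, sum_rho_sq hy]
  simp

/-- `g ρ = φ F_•`: Euler's relation for the fundamental tensor. -/
lemma sum_gm_rho {φ : ℝ → ℝ → ℝ → ℝ → ℝ} (hφ : Sm φ) (a x : Fin n → ℝ) {y : Fin n → ℝ}
    (hy : y ≠ 0) (i : Fin n) :
    ∑ j, gm φ a x y i j * (y j / nrm y) = ev φ a x y * Fi φ a x y i := by
  have hs := sum_sv_mul (x := x) hy
  have ht : ∑ i, tv a y i * (y i / nrm y) = 0 := sum_sv_mul (x := a) hy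
  have e : ∀ j, gm φ a x y i j * (y j / nrm y) =
      Fi φ a x y i * ev φ a x y * (y j / nrm y * (y j / nrm y)) +
      (Fi φ a x y i * ev (pds φ) a x y + ev φ a x y * ev (pds (pds φ)) a x y * sv x y i +
        ev φ a x y * ev (pdt (pds φ)) a x y * tv a y i) * (sv x y j * (y j / nrm y)) +
      (Fi φ a x y i * ev (pdt φ) a x y + ev φ a x y * ev (pdt (pds φ)) a x y * sv x y i +
        ev φ a x y * ev (pdt (pdt φ)) a x y * tv a y i) * (tv a y j * (y j / nrm y)) +
      ev φ a x y * ev (sig1 φ) a x y * (Pm y i j * (y j / nrm y)) := by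
    intro j
    rw [gm_eq hφ a x hy]
    unfold Am
    rw [show Fi φ a x y j = ev φ a x y * (y j / nrm y) + ev (pds φ) a x y * sv x y j +
      ev (pdt φ) a x y * tv a y j from rfl]
    ring
  simp only [e, Finset.sum_add_distrib, ← Finset.mul_sum, hs, ht, sum_rho_sq hy, sum_Pm_rho hy]
  ring

/-- A purely algebraic identity: the trace `G^{jl} C_{jl}` of the tensor appearing in `cart_eq`
(with the third index fixed), where `G` is the inverse of `g = F F + φ A` and `G F` is orthogonal
to `s` and `t`. Here `A = σ P + p s s + q (s t + t s) + w t t`; `fs, ft` stand for `φ_s, φ_t`, `ms, mt` for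
`σ_{1s}, σ_{1t}`, and `c1, c2, c3, c4` for `φ_sss, φ_sst, φ_stt, φ_ttt`. -/
lemma trace_formula (G g A P : Fin n → Fin n → ℝ) (F s t : Fin n → ℝ) (k : Fin n)
    (φ σ p q w fs ft ms mt c1 c2 c3 c4 : ℝ) (hφ : φ ≠ 0) (hσ : σ ≠ 0)
    (hsym : ∀ i j, G i j = G j i)
    (hGg : ∀ i j, ∑ l, G i l * g l j = if i = j then 1 else 0)
    (hg : ∀ i j, g i j = F i * F j + φ * A i j)
    (hA : ∀ i j, A i j = σ * P i j + p * (s i * s j) + q * (s i * t j + t i * s j)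
      + w * (t i * t j))
    (hFF : ∑ i, ∑ j, G i j * (F i * F j) = 1)
    (hsF : ∑ i, ∑ j, G i j * (s i * F j) = 0)
    (htF : ∑ i, ∑ j, G i j * (t i * F j) = 0) :
    ∑ j, ∑ l, G j l * ((fs * s k + ft * t k) * A j l + (fs * s j + ft * t j) * A l k
      + (fs * s l + ft * t l) * A j k
      + φ * (P j l * (ms * s k + mt * t k) + P j k * (ms * s l + mt * t l)
        + P l k * (ms * s j + mt * t j)
      + (c1 * (s j * s l * s k) + c2 * (s j * s l * t k + s j * t l * s k + t j * s l * s k)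
        + c3 * (s j * t l * t k + t j * s l * t k + t j * t l * s k) + c4 * (t j * t l * t k)))) =
    (((n : ℝ) + 1) * (fs / φ + ms / σ)
      + (∑ i, ∑ j, G i j * s i * s j) * (c1 - 3 * ms * p / σ) * φ
      + 2 * (∑ i, ∑ j, G i j * s i * t j) * (c2 - (2 * ms * q + mt * p) / σ) * φ
      + (∑ i, ∑ j, G i j * t i * t j) * (c3 - (2 * mt * q + ms * w) / σ) * φ) * s k +
    (((n : ℝ) + 1) * (ft / φ + mt / σ)
      + (∑ i, ∑ j, G i j * t i * t j) * (c4 - 3 * mt * w / σ) * φ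
      + (∑ i, ∑ j, G i j * s i * s j) * (c2 - (2 * ms * q + mt * p) / σ) * φ
      + 2 * (∑ i, ∑ j, G i j * s i * t j) * (c3 - (2 * mt * q + ms * w) / σ) * φ) * t k := by
  have hAeq : ∀ i j, A i j = (g i j - F i * F j) / φ := by
    intro i j
    rw [hg]
    field_simp
    ring
  have hPeq : ∀ i j, P i j = (A i j - p * (s i * s j) - q * (s i * t j + t i * s j)
      - w * (t i * t j)) / σ := by
    intro i j
    rw [hA]
    field_simp
    ring
  -- `g^{ij} v_i g_{jk} = v_k`
  have hGv : ∀ v : Fin n → ℝ, ∑ j, ∑ l, G j l * (v j * g l k) = v k := by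
    intro v
    have : ∀ j, ∑ l, G j l * (v j * g l k) = v j * (if j = k then 1 else 0) := by
      intro j
      rw [← hGg j k, Finset.mul_sum]
      exact Finset.sum_congr rfl fun l _ => by ring
    simp [this]
  have hswap : ∀ v w : Fin n → ℝ, ∑ j, ∑ l, G j l * (v l * w j) = ∑ j, ∑ l, G j l * (v j * w l) := by
    intro v w
    rw [Finset.sum_comm]
    refine Finset.sum_congr rfl fun j _ => Finset.sum_congr rfl fun l _ => ?_
    rw [hsym]
  -- the trace of `A`
  have T0 : ∑ j, ∑ l, G j l * A j l = ((n : ℝ) - 1) / φ := by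
    have e1 : ∑ j, ∑ l, G j l * g j l = (n : ℝ) := by
      rw [Finset.sum_comm]
      have : ∀ l, ∑ j, G j l * g j l = 1 := by
        intro l
        simp only [fun j => hsym j l, hGg, if_true]
      simp [this]
    have e2 : ∀ j l, G j l * A j l = (G j l * g j l - G j l * (F j * F l)) / φ := by
      intro j l
      rw [hAeq]
      ring
    simp only [e2, ← Finset.sum_div, Finset.sum_sub_distrib, e1, hFF]
  -- contraction of `A` with a vector orthogonal to `G F`
  have T1 : ∀ v : Fin n → ℝ, ∑ i, ∑ j, G i j * (v i * F j) = 0 →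
      ∑ j, ∑ l, G j l * (v j * A l k) = v k / φ := by
    intro v hv
    have e2 : ∀ j l, G j l * (v j * A l k)
        = (G j l * (v j * g l k) - G j l * (v j * F l) * F k) / φ := by
      intro j l
      rw [hAeq]
      ring
    simp only [e2, ← Finset.sum_div, Finset.sum_sub_distrib, ← Finset.sum_mul, hGv, hv]
    ring
  have T2 : ∀ v : Fin n → ℝ, ∑ i, ∑ j, G i j * (v i * F j) = 0 →
      ∑ j, ∑ l, G j l * (v l * A j k) = v k / φ := fun v hv =>
    (hswap v (fun j => A j k)).trans (T1 v hv)
  have hR : ∑ j, ∑ l, G j l * (t j * s l) = ∑ j, ∑ l, G j l * (s j * t l) := by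
    rw [← hswap t s]
    exact Finset.sum_congr rfl fun j _ => Finset.sum_congr rfl fun l _ => by ring
  simp only [mul_assoc (G _ _)]
  have lin : ∀ (X1 X2 X3 X4 X5 X6 X7 X8 X9 C : Fin n → Fin n → ℝ)
      (a1 a2 a3 a4 a5 a6 a7 a8 a9 : ℝ),
      (∀ j l, C j l = a1 * X1 j l + a2 * X2 j l + a3 * X3 j l + a4 * X4 j l + a5 * X5 j l
        + a6 * X6 j l + a7 * X7 j l + a8 * X8 j l + a9 * X9 j l) →
      ∑ j, ∑ l, G j l * C j l = a1 * ∑ j, ∑ l, G j l * X1 j l + a2 * ∑ j, ∑ l, G j l * X2 j l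
        + a3 * ∑ j, ∑ l, G j l * X3 j l + a4 * ∑ j, ∑ l, G j l * X4 j l
        + a5 * ∑ j, ∑ l, G j l * X5 j l + a6 * ∑ j, ∑ l, G j l * X6 j l
        + a7 * ∑ j, ∑ l, G j l * X7 j l + a8 * ∑ j, ∑ l, G j l * X8 j l
        + a9 * ∑ j, ∑ l, G j l * X9 j l := by
    intro X1 X2 X3 X4 X5 X6 X7 X8 X9 C a1 a2 a3 a4 a5 a6 a7 a8 a9 h
    simp only [Finset.mul_sum, ← Finset.sum_add_distrib]
    refine Finset.sum_congr rfl fun j _ => Finset.sum_congr rfl fun l _ => ?_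
    rw [h]
    ring
  rw [lin (fun j l => A j l) (fun j l => s j * A l k) (fun j l => t j * A l k)
    (fun j l => s l * A j k) (fun j l => t l * A j k) (fun j l => s j * s l)
    (fun j l => s j * t l) (fun j l => t j * s l) (fun j l => t j * t l) _
    (fs * s k + ft * t k + φ / σ * (ms * s k + mt * t k))
    (fs + φ / σ * ms) (ft + φ / σ * mt) (fs + φ / σ * ms) (ft + φ / σ * mt)
    (φ * (c1 * s k + c2 * t k - p * (ms * s k + mt * t k) / σ - 2 * ms * (p * s k + q * t k) / σ))
    (φ * (c2 * s k + c3 * t k - q * (ms * s k + mt * t k) / σ - mt * (p * s k + q * t k) / σ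
      - ms * (q * s k + w * t k) / σ))
    (φ * (c2 * s k + c3 * t k - q * (ms * s k + mt * t k) / σ - mt * (p * s k + q * t k) / σ
      - ms * (q * s k + w * t k) / σ))
    (φ * (c3 * s k + c4 * t k - w * (ms * s k + mt * t k) / σ - 2 * mt * (q * s k + w * t k) / σ))
    (fun j l => by simp only [hPeq]; ring),
    T0, T1 s hsF, T1 t htF, T2 s hsF, T2 t htF, hR]
  field_simp
  ring

end GSSFinsler

open GSSFinsler in
/-- The mean Cartan torsion of a general spherically symmetric
metric satisfies `I_k = (1/(2r)) (H s_k + K t_k)`. -/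
theorem mean_cartan_formula_general_spherically_symmetric
    {n : ℕ} (φ : ℝ → ℝ → ℝ → ℝ → ℝ)
    (hφ : ContDiff ℝ (⊤ : ℕ∞) (fun p : ℝ × ℝ × ℝ × ℝ => φ p.1 p.2.1 p.2.2.1 p.2.2.2))
    (a x y : Fin n → ℝ) (hy : y ≠ 0)
    (hinv : IsUnit (gMat φ a x y).det)
    (hφpos : 0 < ev φ a x y)
    (hσ1 : ev (sig1 φ) a x y ≠ 0) :
    ∀ k : Fin n,
      mci φ a x y k =
        1 / (2 * nrm y) * (Hc φ a x y * sv x y k + Kc φ a x y * tv a y k) := by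
  intro k
  have hS : Sm φ := hφ
  have hne := hφpos.ne'
  have hgs : ∀ i j, gm φ a x y i j = gm φ a x y j i := fun i j => by
    rw [gm_eq hS a x hy, gm_eq hS a x hy, Am_comm]
    ring
  have hGg : gInv φ a x y * gMat φ a x y = 1 := Matrix.nonsing_inv_mul _ hinv
  have hsymM : (gInv φ a x y).transpose = gInv φ a x y := by
    unfold gInv
    rw [Matrix.transpose_nonsing_inv]
    congr 1
    ext i j
    exact hgs j i
  have hGg' : ∀ i j, ∑ l, gInv φ a x y i l * gm φ a x y l j = if i = j then 1 else 0 := by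
    intro i j
    have h := congrFun (congrFun hGg i) j
    rw [Matrix.mul_apply, Matrix.one_apply] at h
    exact h
  -- `g^{ij} F_j = ρ^i / φ`, from Euler's relation `g ρ = φ F_•`
  have hGF : ∀ i, ∑ j, gInv φ a x y i j * Fi φ a x y j = y i / nrm y / ev φ a x y := by
    intro i
    rw [eq_div_iff hne, Finset.sum_mul]
    have e : ∀ j, gInv φ a x y i j * Fi φ a x y j * ev φ a x y
        = ∑ l, gInv φ a x y i j * gm φ a x y j l * (y l / nrm y) := by
      intro j
      simp only [mul_assoc, ← Finset.mul_sum, sum_gm_rho hS a x hy]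
      ring
    simp only [e]
    rw [Finset.sum_comm]
    simp only [← Finset.sum_mul, hGg']
    simp
  have hvF : ∀ v : Fin n → ℝ, ∑ i, ∑ j, gInv φ a x y i j * (v i * Fi φ a x y j)
      = (∑ i, v i * (y i / nrm y)) / ev φ a x y := by
    intro v
    rw [Finset.sum_div]
    refine Finset.sum_congr rfl fun i _ => ?_
    rw [mul_div_assoc, ← hGF, Finset.mul_sum]
    exact Finset.sum_congr rfl fun j _ => by ring
  have hs := sum_sv_mul (x := x) hy
  have ht : ∑ i, tv a y i * (y i / nrm y) = 0 := sum_sv_mul (x := a) hy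
  have hFrho : ∑ i, Fi φ a x y i * (y i / nrm y) = ev φ a x y := by
    unfold Fi
    simp only [add_mul, mul_assoc, Finset.sum_add_distrib, ← Finset.mul_sum, hs, ht, sum_rho_sq hy]
    ring
  have key := trace_formula (fun i j => gInv φ a x y i j) (gm φ a x y) (Am φ a x y) (Pm y)
    (Fi φ a x y) (sv x y) (tv a y) k (ev φ a x y) (ev (sig1 φ) a x y) (ev (pds (pds φ)) a x y)
    (ev (pdt (pds φ)) a x y) (ev (pdt (pdt φ)) a x y) (ev (pds φ) a x y) (ev (pdt φ) a x y)
    (ev (pds (sig1 φ)) a x y) (ev (pdt (sig1 φ)) a x y) (ev (pds (pds (pds φ))) a x y)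
    (ev (pdt (pds (pds φ))) a x y) (ev (pds (pdt (pdt φ))) a x y) (ev (pdt (pdt (pdt φ))) a x y)
    hne hσ1 (fun i j => congrFun (congrFun hsymM j) i) hGg' (gm_eq hS a x hy) (fun i j => rfl)
    (by rw [hvF, hFrho, div_self hne]) (by rw [hvF, hs, zero_div]) (by rw [hvF, ht, zero_div])
  unfold Hc Kc
  rw [pds_pdt hS]
  refine Eq.trans ?_ (congrArg (fun b => 1 / (2 * nrm y) * b) key)
  unfold mci
  rw [Finset.mul_sum]
  refine Finset.sum_congr rfl fun j _ => ?_
  rw [Finset.mul_sum]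
  refine Finset.sum_congr rfl fun l _ => ?_
  rw [cart_eq hS a x hy, mul_left_comm]
  rfl
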